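/- arXiv:1306.0435 — 4 statements merged into one kernel-verified Lean document; each statement's English description precedes it below -/
import Mathlib

section
/- For every 1 ≤ p < ∞, the set C^∞(ℝ) ∩ L^p_unif(ℝ) is dense in the Stepanov space L^p_unif(ℝ): for every f ∈ L^p_unif(ℝ) and every ε > 0 there exists a smooth function g ∈ C^∞(ℝ) with finite Stepanov norm such that ‖f − g‖_{L^p_unif(ℝ)} < ε. Moreover, if f is real-valued then g can be chosen real-valued. -/
open MeasureTheory

lemma stp_local (p : ℝ) (hp : 1 ≤ p) (f : ℝ → ℂ)
    (hf_meas : AEStronglyMeasurable f volume)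
    (hf_loc : LocallyIntegrable (fun s => ‖f s‖ ^ p) volume)
    (δ : ℝ) (hδ : 0 < δ) (a b : ℝ) :
    ∃ g : ℝ → ℂ, ContDiff ℝ (⊤ : ℕ∞) g ∧
      IntegrableOn (fun s => ‖f s - g s‖ ^ p) (Set.Icc a b) ∧
      (∫ s in Set.Icc a b, ‖f s - g s‖ ^ p) ≤ δ ∧
      ((∀ x, (f x).im = 0) → ∀ x, (g x).im = 0) := by
  have hp0 : 0 < p := by linarith
  have hq0 : ENNReal.ofReal p ≠ 0 := by simpa using hp0
  have hqr : (ENNReal.ofReal p).toReal = p := ENNReal.toReal_ofReal hp0.le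
  have hint : IntegrableOn (fun s => ‖f s‖ ^ p) (Set.Icc a b) :=
    hf_loc.integrableOn_isCompact isCompact_Icc
  have hmem : MemLp f (ENNReal.ofReal p) (volume.restrict (Set.Icc a b)) := by
    rw [← integrable_norm_rpow_iff hf_meas.restrict hq0 ENNReal.ofReal_ne_top, hqr]
    exact hint
  have key : ∃ g : ℝ → ℂ, ContDiff ℝ (⊤ : ℕ∞) g ∧
      IntegrableOn (fun s => ‖f s - g s‖ ^ p) (Set.Icc a b) ∧
      (∫ s in Set.Icc a b, ‖f s - g s‖ ^ p) ≤ δ := by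
    obtain ⟨g, hg1, hg2, hg3⟩ := hmem.exist_eLpNorm_sub_le ENNReal.ofReal_ne_top
      (by simpa using hp) (ε := δ ^ p⁻¹) (by positivity)
    have hgm : MemLp g (ENNReal.ofReal p) (volume.restrict (Set.Icc a b)) :=
      hg2.continuous.memLp_of_hasCompactSupport hg1
    have hd := hmem.sub hgm
    refine ⟨g, hg2, ?_, ?_⟩
    · have := hd.integrable_norm_rpow hq0 ENNReal.ofReal_ne_top
      rw [hqr] at this
      exact this
    · rw [hd.eLpNorm_eq_integral_rpow_norm hq0 ENNReal.ofReal_ne_top, hqr,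
        ENNReal.ofReal_le_ofReal_iff (by positivity)] at hg3
      have h0 : 0 ≤ ∫ s in Set.Icc a b, ‖(f - g) s‖ ^ p :=
        integral_nonneg fun x => by positivity
      exact (Real.rpow_le_rpow_iff h0 hδ.le (inv_pos.2 hp0)).1 hg3
  obtain ⟨g, hg1, hg2, hg3⟩ := key
  by_cases hr : ∀ x, (f x).im = 0
  · have hle : ∀ s, ‖f s - ((g s).re : ℂ)‖ ^ p ≤ ‖f s - g s‖ ^ p := by
      intro s
      refine Real.rpow_le_rpow (norm_nonneg _) ?_ hp0.le
      have : f s - ((g s).re : ℂ) = (((f s - g s).re : ℝ) : ℂ) := by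
        apply Complex.ext <;> simp [hr s]
      rw [this, Complex.norm_real]
      exact Complex.abs_re_le_norm _
    have hc : ContDiff ℝ (⊤ : ℕ∞) (fun s => ((g s).re : ℂ)) :=
      Complex.ofRealCLM.contDiff.comp (Complex.reCLM.contDiff.comp hg1)
    refine ⟨fun s => ((g s).re : ℂ), hc, ?_, ?_, ?_⟩
    · refine Integrable.mono' hg2 ?_ (Filter.Eventually.of_forall fun s => ?_)
      · have h1 : AEMeasurable (fun s => ‖f s - ((g s).re : ℂ)‖) volume :=
          (hf_meas.sub hc.continuous.aestronglyMeasurable).norm.aemeasurable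
        exact (h1.pow_const p).aestronglyMeasurable.restrict
      · rw [Real.norm_of_nonneg (by positivity)]
        exact hle s
    · refine le_trans (integral_mono_of_nonneg (Filter.Eventually.of_forall fun s => ?_) hg2
        (Filter.Eventually.of_forall hle)) hg3
      simp only [Pi.zero_apply]
      positivity
    · intro _ x
      simp
  · exact ⟨g, hg1, hg2, hg3, fun h => absurd h hr⟩

lemma stp_glue (G : ℤ → ℝ → ℂ) (hG : ∀ n, ContDiff ℝ (⊤ : ℕ∞) (G n)) :
    ∃ g : ℝ → ℂ, ContDiff ℝ (⊤ : ℕ∞) g ∧ ∀ (n : ℤ) (x : ℝ), (n : ℝ) ≤ x → x ≤ n + 1 →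
      ∃ θ : ℝ, 0 ≤ θ ∧ θ ≤ 1 ∧ g x = ((1 - θ : ℝ) : ℂ) * G n x + (θ : ℂ) * G (n + 1) x := by
  set s := Real.smoothTransition with hs
  let F : ℤ → ℝ → ℂ := fun n x => ((s (x - n + 1) - s (x - n) : ℝ) : ℂ) * G n x
  have hz : ∀ (n : ℤ) (x : ℝ), F n x ≠ 0 → (n : ℝ) - 1 ≤ x ∧ x ≤ n + 1 := by
    intro n x h
    constructor
    · by_contra! hc
      apply h
      simp [F, hs, Real.smoothTransition.zero_of_nonpos (show x - n + 1 ≤ 0 by linarith),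
        Real.smoothTransition.zero_of_nonpos (show x - n ≤ 0 by linarith)]
    · by_contra! hc
      apply h
      simp [F, hs, Real.smoothTransition.one_of_one_le (show 1 ≤ x - n + 1 by linarith),
        Real.smoothTransition.one_of_one_le (show 1 ≤ x - n by linarith)]
  refine ⟨fun x => ∑ᶠ n, F n x, ?_, ?_⟩
  · rw [← contMDiff_iff_contDiff]
    refine contMDiff_finsum (fun n => ?_) ?_
    · rw [contMDiff_iff_contDiff]
      refine ContDiff.mul ?_ (hG n)
      refine Complex.ofRealCLM.contDiff.comp ?_
      have h1 : ContDiff ℝ (⊤ : ℕ∞) s := Real.smoothTransition.contDiff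
      exact (h1.comp (by fun_prop)).sub (h1.comp (by fun_prop))
    · intro x
      refine ⟨Set.Ioo (x - 1) (x + 1), Ioo_mem_nhds (by linarith) (by linarith), ?_⟩
      refine (Set.finite_Icc ⌊x - 3⌋ ⌈x + 3⌉).subset ?_
      rintro n ⟨y, hy1, hy2⟩
      have h := hz n y hy1
      have h2 := hy2.1
      have h3 := hy2.2
      constructor
      · have : ((⌊x - 3⌋ : ℤ) : ℝ) ≤ n := (Int.floor_le _).trans (by linarith [h.2])
        exact_mod_cast this
      · have : (n : ℝ) ≤ ⌈x + 3⌉ := le_trans (by linarith [h.1]) (Int.le_ceil _)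
        exact_mod_cast this
  · intro n x h1 h2
    refine ⟨s (x - n), Real.smoothTransition.nonneg _, Real.smoothTransition.le_one _, ?_⟩
    have hsum : ∑ᶠ k, F k x = ∑ k ∈ ({n, n + 1} : Finset ℤ), F k x := by
      by_cases he : x = n
      · refine finsum_eq_sum_of_support_subset _ ?_
        intro k hk
        have h := hz k x hk
        by_contra hc
        simp only [Finset.coe_insert, Finset.coe_singleton, Set.mem_insert_iff,
          Set.mem_singleton_iff, not_or] at hc
        have a1 : k ≤ n + 1 := by have := h.1; rw [he] at this; exact_mod_cast (by linarith : (k:ℝ) ≤ n + 1)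
        have a2 : n ≤ k + 1 := by have := h.2; rw [he] at this; exact_mod_cast this
        have a3 : k = n - 1 := by omega
        apply hk
        subst a3
        simp [F, hs, he, Real.smoothTransition.one_of_one_le (show (1:ℝ) ≤ 1 + 1 by norm_num)]
      · refine finsum_eq_sum_of_support_subset _ ?_
        intro k hk
        have h := hz k x hk
        have h1' : (n : ℝ) < x := lt_of_le_of_ne h1 (Ne.symm he)
        have a2 : n < k + 1 := by exact_mod_cast (lt_of_lt_of_le h1' h.2)
        by_cases hk2 : k ≤ n + 1
        · have : k = n ∨ k = n + 1 := by omega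
          simpa using this
        · exfalso
          have a4 : k = n + 2 := by
            have : (k : ℝ) ≤ n + 2 := by linarith [h.1]
            have : k ≤ n + 2 := by exact_mod_cast this
            omega
          apply hk
          subst a4
          have b1 : s (x - ((n + 2 : ℤ) : ℝ) + 1) = 0 :=
            Real.smoothTransition.zero_of_nonpos (by push_cast; linarith)
          have b2 : s (x - ((n + 2 : ℤ) : ℝ)) = 0 :=
            Real.smoothTransition.zero_of_nonpos (by push_cast; linarith)
          simp only [F, b1, b2]
          simp
    have c1 : s (x - n + 1) = 1 := Real.smoothTransition.one_of_one_le (by linarith)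
    have c2 : s (x - ((n + 1 : ℤ) : ℝ) + 1) = s (x - n) := by congr 1; push_cast; ring
    have c3 : s (x - ((n + 1 : ℤ) : ℝ)) = 0 :=
      Real.smoothTransition.zero_of_nonpos (by push_cast; linarith)
    simp only [hsum]
    rw [Finset.sum_pair (by omega)]
    simp only [F, c1, c2, c3]
    simp

theorem smooth_dense_in_stepanov (p : ℝ) (hp : 1 ≤ p) (f : ℝ → ℂ)
    (hf_meas : AEStronglyMeasurable f volume)
    (hf_loc : LocallyIntegrable (fun s => ‖f s‖ ^ p) volume)
    (hf_bdd : BddAbove (Set.range fun t : ℝ => ∫ s in t..(t + 1), ‖f s‖ ^ p))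
    (ε : ℝ) (hε : 0 < ε) :
    ∃ g : ℝ → ℂ, ContDiff ℝ (⊤ : ℕ∞) g ∧
      BddAbove (Set.range fun t : ℝ => ∫ s in t..(t + 1), ‖g s‖ ^ p) ∧
      (⨆ t : ℝ, ∫ s in t..(t + 1), ‖f s - g s‖ ^ p) ^ (1 / p) < ε ∧
      ((∀ x, (f x).im = 0) → ∀ x, (g x).im = 0) := by
  have hp0 : 0 < p := by linarith
  obtain ⟨δ, hδ, hδe⟩ : ∃ δ : ℝ, 0 < δ ∧ 3 * δ = (ε / 2) ^ p :=
    ⟨(ε / 2) ^ p / 3, by positivity, by ring⟩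
  choose G hG1 hG2 hG3 hG4 using fun n : ℤ =>
    stp_local p hp f hf_meas hf_loc δ hδ ((n : ℝ) - 2) (n + 2)
  obtain ⟨g, hg, hgl⟩ := stp_glue G hG1
  let H : ℤ → ℝ → ℝ := fun n x =>
    ‖f x - G n x‖ ^ p + ‖f x - G (n + 1) x‖ ^ p + ‖f x - G (n + 2) x‖ ^ p
  have hnn : ∀ n x, 0 ≤ ‖f x - G n x‖ ^ p := fun n x => by positivity
  have step : ∀ (n : ℤ) (x : ℝ), (n : ℝ) ≤ x → x ≤ n + 1 →
      ‖f x - g x‖ ^ p ≤ ‖f x - G n x‖ ^ p + ‖f x - G (n + 1) x‖ ^ p := by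
    intro n x h1 h2
    obtain ⟨θ, t0, t1, hx⟩ := hgl n x h1 h2
    have e : f x - g x = ((1 - θ : ℝ) : ℂ) * (f x - G n x) + (θ : ℂ) * (f x - G (n + 1) x) := by
      rw [hx]; push_cast; ring
    have hn : ‖f x - g x‖ ≤ (1 - θ) * ‖f x - G n x‖ + θ * ‖f x - G (n + 1) x‖ := by
      rw [e]
      refine (norm_add_le _ _).trans ?_
      rw [norm_mul, norm_mul, Complex.norm_real, Complex.norm_real,
        Real.norm_of_nonneg t0, Real.norm_of_nonneg (by linarith : (0:ℝ) ≤ 1 - θ)]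
    rcases le_total ‖f x - G n x‖ ‖f x - G (n + 1) x‖ with h | h
    · have : ‖f x - g x‖ ≤ ‖f x - G (n + 1) x‖ := by nlinarith
      have := Real.rpow_le_rpow (norm_nonneg _) this hp0.le
      linarith [hnn n x]
    · have : ‖f x - g x‖ ≤ ‖f x - G n x‖ := by nlinarith
      have := Real.rpow_le_rpow (norm_nonneg _) this hp0.le
      linarith [hnn (n + 1) x]
  have stepH : ∀ (n : ℤ) (x : ℝ), (n : ℝ) ≤ x → x ≤ n + 2 → ‖f x - g x‖ ^ p ≤ H n x := by
    intro n x h1 h2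
    simp only [H]
    rcases le_total x (n + 1) with h | h
    · linarith [step n x h1 h, hnn (n + 2) x]
    · have := step (n + 1) x (by push_cast; exact h) (by push_cast; linarith)
      rw [show n + 1 + 1 = n + 2 by ring] at this
      linarith [hnn n x]
  have sub : ∀ t : ℝ, ∀ k : ℤ, ⌊t⌋ ≤ k → k ≤ ⌊t⌋ + 2 →
      Set.Ioc t (t + 1) ⊆ Set.Icc ((k : ℝ) - 2) (k + 2) := by
    intro t k h1 h2 x hx
    have a1 := Int.floor_le t
    have a2 := Int.lt_floor_add_one t
    have b1 : ((⌊t⌋ : ℤ) : ℝ) ≤ k := by exact_mod_cast h1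
    have b2 : (k : ℝ) ≤ ⌊t⌋ + 2 := by exact_mod_cast h2
    exact ⟨by linarith [hx.1], by linarith [hx.2]⟩
  have I1 : ∀ t : ℝ, ∀ k : ℤ, ⌊t⌋ ≤ k → k ≤ ⌊t⌋ + 2 →
      IntegrableOn (fun s => ‖f s - G k s‖ ^ p) (Set.Ioc t (t + 1)) :=
    fun t k h1 h2 => (hG2 k).mono_set (sub t k h1 h2)
  have I2 : ∀ t : ℝ, ∀ k : ℤ, ⌊t⌋ ≤ k → k ≤ ⌊t⌋ + 2 →
      ∫ s in Set.Ioc t (t + 1), ‖f s - G k s‖ ^ p ≤ δ :=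
    fun t k h1 h2 => (setIntegral_mono_set (hG2 k)
      (Filter.Eventually.of_forall fun s => hnn k s) (sub t k h1 h2).eventuallyLE).trans (hG3 k)
  have HI : ∀ t : ℝ, IntegrableOn (H ⌊t⌋) (Set.Ioc t (t + 1)) := fun t =>
    ((I1 t ⌊t⌋ (by omega) (by omega)).add (I1 t (⌊t⌋ + 1) (by omega) (by omega))).add
      (I1 t (⌊t⌋ + 2) (by omega) (by omega))
  have HI2 : ∀ t : ℝ, ∫ s in Set.Ioc t (t + 1), H ⌊t⌋ s ≤ 3 * δ := by
    intro t
    simp only [H]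
    have h12 : IntegrableOn (fun s => ‖f s - G ⌊t⌋ s‖ ^ p + ‖f s - G (⌊t⌋ + 1) s‖ ^ p)
        (Set.Ioc t (t + 1)) :=
      (I1 t ⌊t⌋ (by omega) (by omega)).add (I1 t (⌊t⌋ + 1) (by omega) (by omega))
    rw [integral_add h12 (I1 t (⌊t⌋ + 2) (by omega) (by omega)),
      integral_add (I1 t ⌊t⌋ (by omega) (by omega)) (I1 t (⌊t⌋ + 1) (by omega) (by omega))]
    linarith [I2 t ⌊t⌋ (by omega) (by omega), I2 t (⌊t⌋ + 1) (by omega) (by omega),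
      I2 t (⌊t⌋ + 2) (by omega) (by omega)]
  have stepI : ∀ t : ℝ, ∀ x ∈ Set.Ioc t (t + 1), ‖f x - g x‖ ^ p ≤ H ⌊t⌋ x := by
    intro t x hx
    have a1 := Int.floor_le t
    have a2 := Int.lt_floor_add_one t
    exact stepH _ x (by linarith [hx.1]) (by linarith [hx.2])
  refine ⟨g, hg, ?_, ?_, ?_⟩
  · obtain ⟨B, hB⟩ := hf_bdd
    refine ⟨2 ^ p * (B + 3 * δ), ?_⟩
    rintro _ ⟨t, rfl⟩
    have hBt := hB ⟨t, rfl⟩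
    simp only at hBt ⊢
    rw [intervalIntegral.integral_of_le (by linarith)] at hBt ⊢
    have hfI : IntegrableOn (fun s => ‖f s‖ ^ p) (Set.Ioc t (t + 1)) :=
      (hf_loc.integrableOn_isCompact isCompact_Icc).mono_set Set.Ioc_subset_Icc_self
    calc ∫ s in Set.Ioc t (t + 1), ‖g s‖ ^ p
        ≤ ∫ s in Set.Ioc t (t + 1), 2 ^ p * (‖f s‖ ^ p + H ⌊t⌋ s) := by
          refine integral_mono_of_nonneg (Filter.Eventually.of_forall fun s => ?_)
            ((hfI.add (HI t)).const_mul _) ?_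
          · simp only [Pi.zero_apply]; positivity
          · filter_upwards [ae_restrict_mem measurableSet_Ioc] with x hx
            have h1 := stepI t x hx
            have h2 : ‖g x‖ ≤ ‖f x‖ + ‖f x - g x‖ := by
              have := norm_sub_le (f x) (f x - g x)
              simpa using this
            have h3 : 0 ≤ ‖f x‖ ^ p := by positivity
            have h4 : 0 ≤ ‖f x - g x‖ ^ p := by positivity
            have h5 : ‖g x‖ ^ p ≤ 2 ^ p * (‖f x‖ ^ p + ‖f x - g x‖ ^ p) := by
              rcases le_total ‖f x‖ ‖f x - g x‖ with h | h
              · have := Real.rpow_le_rpow (norm_nonneg (g x))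
                  (by linarith : ‖g x‖ ≤ 2 * ‖f x - g x‖) hp0.le
                rw [Real.mul_rpow (by norm_num) (norm_nonneg _)] at this
                refine this.trans ?_
                gcongr
                linarith
              · have := Real.rpow_le_rpow (norm_nonneg (g x))
                  (by linarith : ‖g x‖ ≤ 2 * ‖f x‖) hp0.le
                rw [Real.mul_rpow (by norm_num) (norm_nonneg _)] at this
                refine this.trans ?_
                gcongr
                linarith
            refine h5.trans ?_
            gcongr
      _ = 2 ^ p * ((∫ s in Set.Ioc t (t + 1), ‖f s‖ ^ p) + ∫ s in Set.Ioc t (t + 1), H ⌊t⌋ s) := by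
          rw [integral_const_mul, integral_add hfI (HI t)]
      _ ≤ 2 ^ p * (B + 3 * δ) := by
          have := HI2 t
          gcongr
  · have hle : (⨆ t : ℝ, ∫ s in t..(t + 1), ‖f s - g s‖ ^ p) ≤ (ε / 2) ^ p := by
      rw [← hδe]
      refine ciSup_le fun t => ?_
      rw [intervalIntegral.integral_of_le (by linarith)]
      refine le_trans (integral_mono_of_nonneg (Filter.Eventually.of_forall fun s => ?_)
        (HI t) ?_) (HI2 t)
      · simp only [Pi.zero_apply]; positivity
      · filter_upwards [ae_restrict_mem measurableSet_Ioc] with x hx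
        exact stepI t x hx
    have h0 : 0 ≤ (⨆ t : ℝ, ∫ s in t..(t + 1), ‖f s - g s‖ ^ p) :=
      Real.iSup_nonneg fun t =>
        intervalIntegral.integral_nonneg (by linarith) fun x _ => by positivity
    calc _ ≤ ((ε / 2) ^ p) ^ (1 / p) := Real.rpow_le_rpow h0 hle (by positivity)
      _ = ε / 2 := by rw [one_div, Real.rpow_rpow_inv (by positivity) hp0.ne']
      _ < ε := by linarith
  · intro hr x
    obtain ⟨θ, _, _, hx⟩ := hgl ⌊x⌋ x (Int.floor_le x) (Int.lt_floor_add_one x).le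
    rw [hx]
    simp [hG4 _ hr x, -Complex.ofReal_sub]
end

section
/- Let a, b, s > 0. For ε > 0 define the sector S_{a,b,s,ε} := { λ ∈ ℂ : |Im λ| ≤ 2aε Re λ + 2bε^{−s} }, and let M_{a,b,s} := ⋂_{0 < ε ≤ (2a+1)^{−1}} S_{a,b,s,ε}. Set λ₀ := −(b/a)(2a+1)^{s+1} and λ₁ := (bs/a)(2a+1)^{s+1}. Then M_{a,b,s} is exactly the set { λ ∈ ℂ : λ₀ ≤ Re λ ≤ λ₁ and |Im λ| ≤ (2a/(2a+1)) Re λ + 2b(2a+1)^s } ∪ { λ ∈ ℂ : Re λ > λ₁ and |Im λ| ≤ 2(s+1) b^{1/(s+1)} (a/s)^{s/(s+1)} (Re λ)^{s/(s+1)} }. -/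
theorem bernoulli_neg_aux {s p : ℝ} (hs : -1 < s) (hp : p < 0) : 1 + p * s ≤ (1 + s) ^ p := by
  have h1 : 0 < 1 + s := by linarith
  have hl := Real.log_le_sub_one_of_pos h1
  have := Real.add_one_le_exp (Real.log (1 + s) * p)
  rw [← Real.rpow_def_of_pos h1] at this
  nlinarith

theorem tangent_aux (s e t : ℝ) (hs : 0 < s) (he : 0 < e) (ht : 0 < t) :
    e ^ (-s) - s * e ^ (-(s + 1)) * (t - e) ≤ t ^ (-s) := by
  have h := bernoulli_neg_aux (s := t / e - 1) (p := -s)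
    (by have := div_pos ht he; linarith) (by linarith)
  have h1 : 1 + (t / e - 1) = t / e := by ring
  rw [h1, Real.div_rpow ht.le he.le, le_div_iff₀ (Real.rpow_pos_of_pos he _)] at h
  have h2 : e ^ (-s) = e ^ (-(s + 1)) * e := by
    rw [← Real.rpow_add_one he.ne']; congr 1; ring
  refine le_trans (le_of_eq ?_) h
  rw [h2]; field_simp; ring

theorem min_aux (a b s x e t : ℝ) (hb : 0 < b) (hs : 0 < s) (he : 0 < e) (ht : 0 < t)
    (h : 0 ≤ (t - e) * (a * x - b * s * e ^ (-(s + 1)))) :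
    2 * a * e * x + 2 * b * e ^ (-s) ≤ 2 * a * t * x + 2 * b * t ^ (-s) := by
  have := mul_le_mul_of_nonneg_left (tangent_aux s e t hs he ht) hb.le
  nlinarith

theorem val_aux (a b s x e : ℝ) (ha : 0 < a) (hb : 0 < b) (hs : 0 < s) (hx : 0 < x)
    (hedef : e = (a * x / (b * s)) ^ (-(1 / (s + 1)))) :
    0 < e ∧ a * x = b * s * e ^ (-(s + 1)) ∧
    2 * a * e * x + 2 * b * e ^ (-s) = 2 * (s + 1) * b ^ (1 / (s + 1)) * (a / s) ^ (s / (s + 1)) *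
            x ^ (s / (s + 1)) := by
  have hq : 0 < a * x / (b * s) := by positivity
  have he : 0 < e := by rw [hedef]; positivity
  have h1 : e ^ (-(s + 1)) = a * x / (b * s) := by
    rw [hedef, ← Real.rpow_mul hq.le]
    have : -(1 / (s + 1)) * -(s + 1) = 1 := by field_simp
    rw [this, Real.rpow_one]
  have h2 : a * x = b * s * e ^ (-(s + 1)) := by rw [h1]; field_simp
  have h3 : e ^ (-s) = e ^ (-(s + 1)) * e := by
    rw [← Real.rpow_add_one he.ne']; congr 1; ring
  have h4 : e ^ (-s) = (a * x / (b * s)) ^ (s / (s + 1)) := by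
    rw [hedef, ← Real.rpow_mul hq.le]
    congr 1; field_simp
  have h5 : a * x / (b * s) = (a / s) * x / b := by field_simp
  have h6 : b = b ^ (1 / (s + 1)) * b ^ (s / (s + 1)) := by
    rw [← Real.rpow_add hb]
    have : 1 / (s + 1) + s / (s + 1) = 1 := by field_simp; ring
    rw [this, Real.rpow_one]
  refine ⟨he, h2, ?_⟩
  have h7 : 2 * a * e * x + 2 * b * e ^ (-s) = 2 * (s + 1) * (b * e ^ (-s)) := by
    have : 2 * a * e * x = 2 * e * (a * x) := by ring
    rw [this, h2, h3]; ring
  have h8 : b * e ^ (-s) = b ^ (1 / (s + 1)) * ((a / s) ^ (s / (s + 1)) * x ^ (s / (s + 1))) := by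
    rw [h4, h5, Real.div_rpow (by positivity) hb.le, Real.mul_rpow (by positivity) hx.le]
    have hp : 0 < b ^ (s / (s + 1)) := by positivity
    rw [mul_div_assoc', div_eq_iff hp.ne']
    nth_rewrite 1 [h6]; ring
  rw [h7, h8]; ring


/-- Explicit description of the set `M_{a,b,s} = ⋂_{0 < ε ≤ (2a+1)⁻¹} S_{a,b,s,ε}`, where
`S_{a,b,s,ε} = {λ : |Im λ| ≤ 2aε Re λ + 2bε⁻ˢ}`: it is the union of a sector part (for
`λ₀ ≤ Re λ ≤ λ₁`) and a region bounded by the curve `|Im λ| = C (Re λ)^{s/(s+1)}`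
(for `Re λ > λ₁`). -/
theorem sector_intersection_description (a b s : ℝ) (ha : 0 < a) (hb : 0 < b) (hs : 0 < s) :
    (⋂ ε ∈ Set.Ioc (0 : ℝ) ((2 * a + 1)⁻¹),
        {z : ℂ | |z.im| ≤ 2 * a * ε * z.re + 2 * b * ε ^ (-s)}) =
      {z : ℂ | (-(b / a) * (2 * a + 1) ^ (s + 1) ≤ z.re ∧
            z.re ≤ b * s / a * (2 * a + 1) ^ (s + 1)) ∧
          |z.im| ≤ 2 * a / (2 * a + 1) * z.re + 2 * b * (2 * a + 1) ^ s} ∪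
      {z : ℂ | b * s / a * (2 * a + 1) ^ (s + 1) < z.re ∧
          |z.im| ≤ 2 * (s + 1) * b ^ (1 / (s + 1)) * (a / s) ^ (s / (s + 1)) *
            z.re ^ (s / (s + 1))} := by
  have hA : 0 < 2 * a + 1 := by linarith
  have hinv : ∀ r : ℝ, ((2 * a + 1)⁻¹) ^ (-r) = (2 * a + 1) ^ r := by
    intro r
    rw [Real.rpow_neg (by positivity), Real.inv_rpow hA.le, inv_inv]
  have hE : 0 < (2 * a + 1)⁻¹ := by positivity
  have hpow : (2 * a + 1) ^ (s + 1) = (2 * a + 1) ^ s * (2 * a + 1) := Real.rpow_add_one hA.ne' s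
  have hPs : 0 < (2 * a + 1) ^ s := by positivity
  have hP : 0 < (2 * a + 1) ^ (s + 1) := by positivity
  ext z
  simp only [Set.mem_iInter, Set.mem_setOf_eq, Set.mem_union, Set.mem_Ioc]
  set x := z.re
  have hval : 2 * a * (2 * a + 1)⁻¹ * x + 2 * b * ((2 * a + 1)⁻¹) ^ (-s)
      = 2 * a / (2 * a + 1) * x + 2 * b * (2 * a + 1) ^ s := by
    rw [hinv]; ring
  have big : b * s / a * (2 * a + 1) ^ (s + 1) < x →
      0 < x ∧ (a * x / (b * s)) ^ (-(1 / (s + 1))) ≤ (2 * a + 1)⁻¹ := by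
    intro h
    have hx : 0 < x := lt_trans (by positivity) h
    refine ⟨hx, ?_⟩
    have h1 : (2 * a + 1) ^ (s + 1) ≤ a * x / (b * s) := by
      rw [le_div_iff₀ (by positivity)]
      have h2 := mul_lt_mul_of_pos_left h ha
      have h3 : a * (b * s / a * (2 * a + 1) ^ (s + 1)) = (2 * a + 1) ^ (s + 1) * (b * s) := by
        field_simp
      linarith
    have h4 := Real.rpow_le_rpow_of_nonpos hP h1 (z := -(1 / (s + 1)))
      (by have : 0 < 1 / (s + 1) := by positivity
          linarith)
    refine h4.trans (le_of_eq ?_)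
    rw [← Real.rpow_mul hA.le]
    have : (s + 1) * -(1 / (s + 1)) = -1 := by field_simp
    rw [this, Real.rpow_neg_one]
  constructor
  · intro H
    rcases le_or_gt x (b * s / a * (2 * a + 1) ^ (s + 1)) with h | h
    · left
      have h1 := H _ ⟨hE, le_refl _⟩
      rw [hval] at h1
      refine ⟨⟨?_, h⟩, h1⟩
      have h2 := (abs_nonneg _).trans h1
      have h3 : 2 * a / (2 * a + 1) * x + 2 * b * (2 * a + 1) ^ s
        = 2 * a / (2 * a + 1) * (x - -(b / a) * (2 * a + 1) ^ (s + 1)) := by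
        rw [hpow]; field_simp; ring
      rw [h3] at h2
      have := nonneg_of_mul_nonneg_right h2 (by positivity)
      linarith
    · right
      obtain ⟨hx, hle⟩ := big h
      obtain ⟨he, -, hv⟩ := val_aux a b s x _ ha hb hs hx rfl
      refine ⟨h, ?_⟩
      rw [← hv]
      exact H _ ⟨he, hle⟩
  · rintro (⟨⟨-, h⟩, h1⟩ | ⟨h, h1⟩) t ⟨ht, hte⟩
    · rw [← hval] at h1
      refine h1.trans (min_aux a b s x _ t hb hs hE ht ?_)
      rw [hinv]
      apply mul_nonneg_of_nonpos_of_nonpos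
      · linarith
      · have h2 := mul_le_mul_of_nonneg_left h ha.le
        have h3 : a * (b * s / a * (2 * a + 1) ^ (s + 1)) = b * s * (2 * a + 1) ^ (s + 1) := by
          field_simp
        linarith
    · obtain ⟨hx, hle⟩ := big h
      obtain ⟨he, h2, hv⟩ := val_aux a b s x _ ha hb hs hx rfl
      rw [← hv] at h1
      refine h1.trans (min_aux a b s x _ t hb hs he ht ?_)
      rw [← h2]; simp
end

section
/- Let a, b, s > 0, λ₀ := −(b/a)(2a+1)^{s+1}, λ₁ := (bs/a)(2a+1)^{s+1}, and let M_{a,b,s} := { λ ∈ ℂ : λ₀ ≤ Re λ ≤ λ₁ and |Im λ| ≤ (2a/(2a+1)) Re λ + 2b(2a+1)^s } ∪ { λ ∈ ℂ : Re λ > λ₁ and |Im λ| ≤ 2(s+1) b^{1/(s+1)} (a/s)^{s/(s+1)} (Re λ)^{s/(s+1)} }. Then M_{a,b,s} ⊆ { λ ∈ ℂ : |Im λ| ≤ 2(s+1) b^{1/(s+1)} (a/s)^{s/(s+1)} ( Re λ + (b/a)(2a+1)^{s+1} )^{s/(s+1)} }. -/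
/-- The set `M_{a,b,s}` is contained in the shifted-parabola-type region
`{λ : |Im λ| ≤ 2(s+1) b^{1/(s+1)} (a/s)^{s/(s+1)} (Re λ + (b/a)(2a+1)^{s+1})^{s/(s+1)}}`. -/
theorem M_subset_parabola (a b s : ℝ) (ha : 0 < a) (hb : 0 < b) (hs : 0 < s) :
    ({z : ℂ | (-(b / a) * (2 * a + 1) ^ (s + 1) ≤ z.re ∧
          z.re ≤ b * s / a * (2 * a + 1) ^ (s + 1)) ∧
        |z.im| ≤ 2 * a / (2 * a + 1) * z.re + 2 * b * (2 * a + 1) ^ s} ∪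
     {z : ℂ | b * s / a * (2 * a + 1) ^ (s + 1) < z.re ∧
        |z.im| ≤ 2 * (s + 1) * b ^ (1 / (s + 1)) * (a / s) ^ (s / (s + 1)) *
          z.re ^ (s / (s + 1))}) ⊆
      {z : ℂ | |z.im| ≤ 2 * (s + 1) * b ^ (1 / (s + 1)) * (a / s) ^ (s / (s + 1)) *
        (z.re + b / a * (2 * a + 1) ^ (s + 1)) ^ (s / (s + 1))} := by
  have hq : 0 < s / (s + 1) := by positivity
  have hp : 0 < 1 / (s + 1) := by positivity
  have hpq : 1 / (s + 1) + s / (s + 1) = 1 := by field_simp; ring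
  have hps : (s + 1) * (1 / (s + 1)) = 1 := by field_simp
  have hT : 0 < 2 * a + 1 := by positivity
  have hTs : (2 * a + 1) ^ (s + 1) = (2 * a + 1) ^ s * (2 * a + 1) := by
    rw [Real.rpow_add hT, Real.rpow_one]
  have hTp : 0 < (2 * a + 1) ^ (s + 1) := by positivity
  have hTroot : ((2 * a + 1) ^ (s + 1)) ^ (1 / (s + 1)) = 2 * a + 1 := by
    rw [← Real.rpow_mul hT.le, hps, Real.rpow_one]
  rintro z (⟨⟨h1, h2⟩, h3⟩ | ⟨h1, h2⟩)
  · simp only [Set.mem_setOf_eq]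
    have hline : 2 * a / (2 * a + 1) * z.re + 2 * b * (2 * a + 1) ^ s
        = 2 * a / (2 * a + 1) * (z.re + b / a * (2 * a + 1) ^ (s + 1)) := by
      rw [hTs]; field_simp
    rw [hline] at h3
    refine h3.trans ?_
    have hw0 : 0 ≤ z.re + b / a * (2 * a + 1) ^ (s + 1) := by linarith
    have hw1 : z.re + b / a * (2 * a + 1) ^ (s + 1)
        ≤ b * (s + 1) / a * (2 * a + 1) ^ (s + 1) := by
      have : b * (s + 1) / a * (2 * a + 1) ^ (s + 1)
        = b * s / a * (2 * a + 1) ^ (s + 1) + b / a * (2 * a + 1) ^ (s + 1) := by ring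
      linarith
    generalize z.re + b / a * (2 * a + 1) ^ (s + 1) = w at hw0 hw1
    generalize 1 / (s + 1) = p at *
    generalize s / (s + 1) = q at *
    have split : ∀ x : ℝ, 0 ≤ x → x = x ^ p * x ^ q := fun x hx => by
      rw [← Real.rpow_add_of_nonneg hx hp.le hq.le, hpq, Real.rpow_one]
    have hwp : w ^ p ≤ b ^ p * (s + 1) ^ p / a ^ p * (2 * a + 1) := by
      refine (Real.rpow_le_rpow hw0 hw1 hp.le).trans (le_of_eq ?_)
      rw [Real.mul_rpow (by positivity) hTp.le, hTroot, Real.div_rpow (by positivity) ha.le,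
        Real.mul_rpow hb.le (by positivity)]
    have hsq : s ^ q ≤ (s + 1) ^ q := Real.rpow_le_rpow hs.le (by linarith) hq.le
    have hsq0 : 0 < s ^ q := by positivity
    have hap : 0 < a ^ p := by positivity
    have hone : 1 ≤ (s + 1) ^ q / s ^ q := by rwa [le_div_iff₀ hsq0, one_mul]
    rw [Real.div_rpow ha.le hs.le]
    calc 2 * a / (2 * a + 1) * w = 2 * a / (2 * a + 1) * (w ^ p * w ^ q) := by rw [← split w hw0]
      _ ≤ 2 * a / (2 * a + 1) * ((b ^ p * (s + 1) ^ p / a ^ p * (2 * a + 1)) * w ^ q) := by gcongr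
      _ = 2 * a * (b ^ p * (s + 1) ^ p / a ^ p) * w ^ q := by field_simp
      _ = 2 * (a ^ p * a ^ q) * (b ^ p * (s + 1) ^ p / a ^ p) * w ^ q := by rw [← split a ha.le]
      _ = 2 * a ^ q * b ^ p * (s + 1) ^ p * w ^ q * 1 := by field_simp
      _ ≤ 2 * a ^ q * b ^ p * (s + 1) ^ p * w ^ q * ((s + 1) ^ q / s ^ q) := by gcongr
      _ = 2 * ((s + 1) ^ p * (s + 1) ^ q) * b ^ p * (a ^ q / s ^ q) * w ^ q := by ring
      _ = _ := by rw [← split (s + 1) (by positivity)]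
  · simp only [Set.mem_setOf_eq]
    refine h2.trans ?_
    have h0 : 0 ≤ z.re := le_trans (by positivity) h1.le
    have : z.re ≤ z.re + b / a * (2 * a + 1) ^ (s + 1) := le_add_of_nonneg_right (by positivity)
    gcongr
end

section
/- Let Q ∈ L²_loc(ℝ,ℂ), τ ∈ L¹_loc(ℝ,ℂ). Let u, w, v, z : ℝ → ℂ be locally absolutely continuous functions such that a.e. u' = w + Qu and v' = z + conj(Q)·v (so w = u^{[1]} := u' − Qu is the quasi-derivative of u and z = v^{{1}} := v' − conj(Q)v is the adjoint quasi-derivative of v). Define a.e. l[u] := −w' − Q·u' + τ·u and l⁺[v] := −( z' + conj(Q)·z + (conj(Q)² − conj(τ))·v ), and define the bracket [u,v](t) := u(t)·conj(z(t)) − w(t)·conj(v(t)). Then for every finite interval [a,b] on which l[u]·conj(v) and u·conj(l⁺[v]) are integrable: ∫_a^b l[u](x)·conj(v(x)) dx − ∫_a^b u(x)·conj(l⁺[v](x)) dx = [u,v](b) − [u,v](a). -/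
open MeasureTheory Filter Topology

/-- The Shin–Zettl quasi-differential expression `l[u] = -(u^{[1]})' - Q u' + τ u`,
written in terms of the quasi-derivative `w = u^{[1]} = u' - Qu` (so that `u' = w + Qu`)
and the a.e. derivative `dw` of `w`. -/
noncomputable def qdL (Q τ u w dw : ℝ → ℂ) (x : ℝ) : ℂ :=
  -dw x - Q x * (w x + Q x * u x) + τ x * u x

/-- The formally adjoint quasi-differential expression
`l⁺[v] = -( (v^{{1}})' + conj(Q) v^{{1}} + (conj(Q)² - conj(τ)) v )`, written in terms of
the adjoint quasi-derivative `z = v^{{1}} = v' - conj(Q)v` and the a.e. derivative `dz`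
of `z`. -/
noncomputable def qdLplus (Q τ v z dz : ℝ → ℂ) (x : ℝ) : ℂ :=
  -(dz x + (starRingEnd ℂ) (Q x) * z x
      + (((starRingEnd ℂ) (Q x)) ^ 2 - (starRingEnd ℂ) (τ x)) * v x)

/-- The bracket `[u,v](t) = u(t) conj(v^{{1}}(t)) - u^{[1]}(t) conj(v(t))`. -/
noncomputable def qdBracket (u w v z : ℝ → ℂ) (t : ℝ) : ℂ :=
  u t * (starRingEnd ℂ) (z t) - w t * (starRingEnd ℂ) (v t)

theorem ac_of_dist_le {f : ℝ → ℂ} {N : ℝ → ℝ} {a b : ℝ}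
    (hN : AbsolutelyContinuousOnInterval N a b)
    (h : ∀ x y, dist (f x) (f y) ≤ dist (N x) (N y)) :
    AbsolutelyContinuousOnInterval f a b := by
  rw [absolutelyContinuousOnInterval_iff] at hN ⊢
  intro ε hε
  obtain ⟨δ, hδ, H⟩ := hN ε hε
  exact ⟨δ, hδ, fun E hE hs =>
    (Finset.sum_le_sum fun i _ => h _ _).trans_lt (H E hE hs)⟩

theorem ac_conj {f : ℝ → ℂ} {a b : ℝ} (hf : AbsolutelyContinuousOnInterval f a b) :
    AbsolutelyContinuousOnInterval (fun x => (starRingEnd ℂ) (f x)) a b := by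
  rw [absolutelyContinuousOnInterval_iff] at hf ⊢
  simpa only [Complex.dist_conj_conj] using hf

theorem ii_of_li {E : Type*} [NormedAddCommGroup E] {f : ℝ → E} (hf : LocallyIntegrable f volume)
    (x y : ℝ) : IntervalIntegrable f volume x y :=
  intervalIntegrable_iff.mpr <|
    (hf.integrableOn_isCompact isCompact_uIcc).mono_set Set.uIoc_subset_uIcc

theorem ac_primitive {f F : ℝ → ℂ} (hf : LocallyIntegrable f volume)
    (hF : ∀ x : ℝ, F x = F 0 + ∫ s in (0:ℝ)..x, f s) (a b : ℝ) :
    AbsolutelyContinuousOnInterval F a b := by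
  have hi := ii_of_li hf
  have hn : ∀ x y, IntervalIntegrable (fun s => ‖f s‖) volume x y := fun x y => (hi x y).norm
  refine ac_of_dist_le (N := fun x => ∫ s in a..x, ‖f s‖)
    ((hn a b).absolutelyContinuousOnInterval_intervalIntegral (by simp)) fun x y => ?_
  rw [hF x, hF y, dist_add_left, dist_eq_norm, dist_eq_norm,
    intervalIntegral.integral_interval_sub_left (hi _ _) (hi _ _),
    intervalIntegral.integral_interval_sub_left (hn _ _) (hn _ _), Real.norm_eq_abs]
  exact intervalIntegral.norm_integral_le_abs_integral_norm

theorem ac_primitive' {f : ℝ → ℂ} {a b : ℝ} (hf : IntervalIntegrable f volume a b) :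
    AbsolutelyContinuousOnInterval (fun x => ∫ s in a..x, f s) a b := by
  have hn := hf.norm.absolutelyContinuousOnInterval_intervalIntegral (c := a) (by simp)
  rw [absolutelyContinuousOnInterval_iff] at hn ⊢
  intro ε hε
  obtain ⟨δ, hδ, H⟩ := hn ε hε
  refine ⟨δ, hδ, fun E hE hs => (Finset.sum_le_sum fun i hi => ?_).trans_lt (H E hE hs)⟩
  have h1 := hE.1 i hi
  have hx : IntervalIntegrable f volume a (E.2 i).1 :=
    hf.mono_set (Set.uIcc_subset_uIcc (by simp) h1.1)
  have hy : IntervalIntegrable f volume a (E.2 i).2 :=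
    hf.mono_set (Set.uIcc_subset_uIcc (by simp) h1.2)
  rw [dist_eq_norm, dist_eq_norm,
    intervalIntegral.integral_interval_sub_left hx hy,
    intervalIntegral.integral_interval_sub_left hx.norm hy.norm, Real.norm_eq_abs]
  exact intervalIntegral.norm_integral_le_abs_integral_norm

theorem ae_deriv_primitive {f F : ℝ → ℂ} (hf : LocallyIntegrable f volume)
    (hF : ∀ x : ℝ, F x = F 0 + ∫ s in (0:ℝ)..x, f s) :
    ∀ᵐ x, HasDerivAt F (f x) x := by
  filter_upwards [_root_.LocallyIntegrable.ae_hasDerivAt_integral hf] with x hx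
  rw [show F = fun x => F 0 + ∫ s in (0:ℝ)..x, f s from funext hF]
  exact (hx 0).const_add (F 0)

/-- Lagrange identity on a finite interval `[a,b]` for the quasi-differential expressions
`l` and `l⁺`:
`∫_a^b l[u] conj(v) - ∫_a^b u conj(l⁺[v]) = [u,v](b) - [u,v](a)`. -/
theorem lagrange_identity_interval (Q τ u w v z dw dz : ℝ → ℂ)
    (hQmeas : AEStronglyMeasurable Q volume)
    (hQ : LocallyIntegrable (fun s => ‖Q s‖ ^ 2) volume)
    (hτ : LocallyIntegrable τ volume)
    (hu' : LocallyIntegrable (fun s => w s + Q s * u s) volume)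
    (hu : ∀ x : ℝ, u x = u 0 + ∫ s in (0:ℝ)..x, (w s + Q s * u s))
    (hv' : LocallyIntegrable (fun s => z s + (starRingEnd ℂ) (Q s) * v s) volume)
    (hv : ∀ x : ℝ, v x = v 0 + ∫ s in (0:ℝ)..x, (z s + (starRingEnd ℂ) (Q s) * v s))
    (hdw : LocallyIntegrable dw volume)
    (hw : ∀ x : ℝ, w x = w 0 + ∫ s in (0:ℝ)..x, dw s)
    (hdz : LocallyIntegrable dz volume)
    (hz : ∀ x : ℝ, z x = z 0 + ∫ s in (0:ℝ)..x, dz s)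
    (a b : ℝ)
    (hint1 : IntervalIntegrable (fun x => qdL Q τ u w dw x * (starRingEnd ℂ) (v x)) volume a b)
    (hint2 : IntervalIntegrable
      (fun x => u x * (starRingEnd ℂ) (qdLplus Q τ v z dz x)) volume a b) :
    (∫ x in a..b, qdL Q τ u w dw x * (starRingEnd ℂ) (v x))
        - (∫ x in a..b, u x * (starRingEnd ℂ) (qdLplus Q τ v z dz x))
      = qdBracket u w v z b - qdBracket u w v z a := by
  rw [← intervalIntegral.integral_sub hint1 hint2]
  have hI := hint1.sub hint2
  have hAC : AbsolutelyContinuousOnInterval (fun t => qdBracket u w v z t -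
      ∫ x in a..t, (qdL Q τ u w dw x * (starRingEnd ℂ) (v x)
        - u x * (starRingEnd ℂ) (qdLplus Q τ v z dz x))) a b :=
    (((ac_primitive hu' hu a b).smul (ac_conj (ac_primitive hdz hz a b))).sub
      ((ac_primitive hdw hw a b).smul (ac_conj (ac_primitive hv' hv a b)))).sub
      (ac_primitive' hI)
  obtain ⟨C, hC⟩ := hAC.const_of_ae_hasDerivAt_zero (by
    filter_upwards [ae_deriv_primitive hu' hu, ae_deriv_primitive hdz hz,
      ae_deriv_primitive hdw hw, ae_deriv_primitive hv' hv, hI.ae_hasDerivAt_integral]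
      with x h1 h2 h3 h4 h5 hx
    have h := ((h1.mul h2.star).sub (h3.mul h4.star)).sub (h5 hx a (by simp))
    refine HasDerivAt.congr_deriv h ?_
    simp only [qdL, qdLplus, ← starRingEnd_apply, map_add, map_neg, map_mul, map_sub, map_pow,
      Complex.conj_conj]
    ring)
  have ha := hC a (by simp)
  have hb := hC b (by simp)
  simp only [intervalIntegral.integral_same, sub_zero] at ha
  rw [ha, ← hb]
  ring
end
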